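/- Let R be a commutative Noetherian ring with unity, I an ideal of R, and M an R-module with cohomological dimension cd(I,M) = c > 0. Then there exists a descending chain of ideals I = I_c ⊋ I_{c-1} ⊋ ⋯ ⊋ I_0 of R such that cd(I_i, M) = i for every i with 0 ≤ i ≤ c. -/

import Mathlib

universe u

open CategoryTheory

/-- The cohomological dimension of `M` with respect to `I`:
`cd(I,M) = sup { i ∈ ℕ | H^i_I(M) ≠ 0 }`, as an element of `ℕ∞`. -/
noncomputable def cohomologicalDimension {R : Type u} [CommRing R] (I : Ideal R)
    (M : ModuleCat.{u} R) : ℕ∞ :=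
  sSup {c : ℕ∞ | ∃ i : ℕ, c = i ∧ Nontrivial ((localCohomology I i).obj M)}

/-!
Adjoining one generator to an ideal raises the cohomological dimension by at most one. The reason
is the exact sequence `0 → R/(J : a) → R/J → R/(J + (a)) → 0`: its long exact `Ext` sequence
expresses a class on `R/(J + (a))` that dies on `R/J` through a class on `R/(J : a)`, and since the
colons `(J : x ^ k)` stabilize, that class also dies once `J` is shrunk and `a` is replaced by a
high enough multiple `a * x ^ k`. As `cd(0, M) = 0`, for every `d < cd(I, M)` an ideal maximal among
the subideals of `I` with `cd ≤ d` has `cd` exactly `d`, and the chain is built downwards from `I`.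
-/

universe v w

/-! ### Comparison of `Ext A C n` with `Abelian.Ext` -/

section ExtComparison

open HomologicalComplex

lemma homologyUnop_hom_naturality {V : Type*} [Category* V] [Limits.HasZeroMorphisms V]
    {ι : Type*} {c : ComplexShape ι} {K L : HomologicalComplex Vᵒᵖ c} (φ : K ⟶ L) (i : ι)
    [K.HasHomology i] [L.HasHomology i] :
    homologyMap ((unopFunctor V c).map φ.op) i ≫ (K.homologyUnop i).hom =
      (L.homologyUnop i).hom ≫ (homologyMap φ i).unop :=
  (congrArg Quiver.Hom.unop (homologyOp_hom_naturality ((unopFunctor V c).map φ.op) i)).symm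

section ModuleComplex

variable {A : Type u} [Ring A] (K : CochainComplex (ModuleCat.{v} A) ℕ) (n : ℕ)

lemma homologyπ_surjective : Function.Surjective (K.homologyπ n) :=
  (ModuleCat.epi_iff_surjective _).1 inferInstance

variable {K n}

lemma homologyπ_eq_zero_iff (z : K.cycles n) :
    K.homologyπ n z = 0 ↔
      ∃ y : K.X ((ComplexShape.up ℕ).prev n), K.d _ n y = K.iCycles n z := by
  rw [← map_eq_zero_iff (K.homologyι n).hom ((ModuleCat.mono_iff_injective _).1 inferInstance),
    ← ConcreteCategory.comp_apply, K.homology_π_ι, ConcreteCategory.comp_apply]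
  exact (K.sc n).moduleCat_pOpcycles_eq_zero_iff _

end ModuleComplex

variable {C : Type w} [Category.{v} C] [Abelian C]

section ExtMk

variable [HasExt.{v} C] {X Y : C} (P : ProjectiveResolution X)

lemma extMk_zero_eq_zero_iff (f : P.complex.X 0 ⟶ Y) (hf : P.complex.d 1 0 ≫ f = 0) :
    P.extMk f 1 rfl hf = 0 ↔ f = 0 := by
  refine ⟨fun h ↦ ?_, fun h ↦ by subst h; simp⟩
  rw [← P.extEquivCohomologyClass.apply_eq_iff_eq, P.extEquivCohomologyClass_extMk,
    P.extEquivCohomologyClass_zero, CochainComplex.HomComplex.CohomologyClass.mk_eq_zero_iff,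
    CochainComplex.HomComplex.Cocycle.toSingleMk_mem_coboundaries_iff _ _ _ _ _ 1 (by simp)] at h
  obtain ⟨g, hg⟩ := h
  have d_eq_zero : P.cochainComplex.d (-(0 : ℕ)) 1 = 0 :=
    (P.cochainComplex.isZero_of_isStrictlyLE 0 1).eq_of_tgt _ _
  rw [d_eq_zero, Limits.zero_comp] at hg
  exact (Preadditive.IsIso.comp_left_eq_zero _ _).1 hg.symm

lemma extMk_eq_zero_iff_exists_d_comp_eq {n : ℕ} (f : P.complex.X n ⟶ Y)
    (hf : P.complex.d (n + 1) n ≫ f = 0) :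
    P.extMk f (n + 1) rfl hf = 0 ↔
      ∃ g : P.complex.X ((ComplexShape.down ℕ).next n) ⟶ Y, P.complex.d n _ ≫ g = f := by
  cases n with
  | zero =>
    rw [extMk_zero_eq_zero_iff]
    simp [eq_comm]
  | succ n => rw [P.extMk_eq_zero_iff f _ _ _ n rfl, ChainComplex.next_nat_succ]

end ExtMk

variable (A : Type u) [Ring A] [Linear A C]

/-- The cochain map `Hom(L, Y) ⟶ Hom(K, Y)` given by precomposition with `φ : K ⟶ L`. -/
noncomputable def linearYonedaObjMap {K L : ChainComplex C ℕ} (φ : K ⟶ L) (Y : C) :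
    L.linearYonedaObj A Y ⟶ K.linearYonedaObj A Y :=
  (unopFunctor _ _).map ((((linearYoneda A C).obj Y).rightOp.mapHomologicalComplex _).map φ).op

variable {A} in
lemma isoExt_inv_naturality [EnoughProjectives C] {X X' : C} {g : X' ⟶ X}
    {P : ProjectiveResolution X} {P' : ProjectiveResolution X'} (φ : P'.Hom P g) (n : ℕ) (Y : C) :
    (P.isoExt n Y).inv ≫ ((Ext A C n).map g.op).app Y =
      homologyMap (linearYonedaObjMap A φ.hom Y) n ≫ (P'.isoExt n Y).inv := by
  let F := ((linearYoneda A C).obj Y).rightOp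
  let ψ := (F.mapHomologicalComplex _).map φ.hom
  have derived : (P.isoLeftDerivedObj F n).hom.unop ≫ ((F.leftDerived n).map g).unop =
      (homologyMap ψ n).unop ≫ (P'.isoLeftDerivedObj F n).hom.unop :=
    congrArg Quiver.Hom.unop (P'.isoLeftDerivedObj_hom_naturality g P φ.hom
      (by simpa using φ.hom_f_zero_comp_π_f_zero) F n)
  have homology := homologyUnop_hom_naturality ψ n
  exact ((CommSq.mk homology.symm).horiz_comp (CommSq.mk derived)).w

section Resolution

variable {X : C} (P : ProjectiveResolution X) {Y : C} {n : ℕ}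

variable {A} in
/-- An `n`-cocycle of `Hom(P, Y)`, viewed as a morphism `P_n ⟶ Y`. -/
noncomputable def cocycleHom (z : (P.complex.linearYonedaObj A Y).cycles n) :
    P.complex.X n ⟶ Y :=
  (P.complex.linearYonedaObj A Y).iCycles n z

variable {A} in
lemma d_comp_cocycleHom (z : (P.complex.linearYonedaObj A Y).cycles n) :
    P.complex.d (n + 1) n ≫ cocycleHom P z = 0 :=
  ConcreteCategory.congr_hom ((P.complex.linearYonedaObj A Y).iCycles_d n (n + 1)) z

variable (Y n) [HasExt.{v} C]

/-- The map sending an `n`-cocycle of `Hom(P, Y)` to the `Ext` class it represents. -/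
noncomputable def cyclesToExt : (P.complex.linearYonedaObj A Y).cycles n →+ Abelian.Ext X Y n :=
  AddMonoidHom.mk' (fun z ↦ P.extMk (cocycleHom P z) (n + 1) rfl (d_comp_cocycleHom P z))
    fun x y ↦ by
      rw [P.add_extMk]
      congr 1
      exact map_add _ x y

variable {Y n} in
lemma cyclesToExt_eq_zero_iff (z : (P.complex.linearYonedaObj A Y).cycles n) :
    cyclesToExt A P Y n z = 0 ↔ (P.complex.linearYonedaObj A Y).homologyπ n z = 0 :=
  (extMk_eq_zero_iff_exists_d_comp_eq P _ (d_comp_cocycleHom P z)).trans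
    (homologyπ_eq_zero_iff z).symm

lemma cyclesToExt_surjective : Function.Surjective (cyclesToExt A P Y n) := fun e ↦ by
  obtain ⟨f, hf, rfl⟩ := P.extMk_surjective e (n + 1) rfl
  let K := P.complex.linearYonedaObj A Y
  have hz : cocycleHom P (K.cyclesMk f (n + 1) (by simp) hf) = f :=
    K.i_cyclesMk f (n + 1) (by simp) hf
  refine ⟨K.cyclesMk f (n + 1) (by simp) hf, ?_⟩
  simp only [cyclesToExt, AddMonoidHom.mk'_apply, hz]

/-- The map `H^n(Hom(P, Y)) ⟶ Ext^n(X, Y)` attached to a projective resolution `P` of `X`. -/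
noncomputable def homologyToExt :
    (P.complex.linearYonedaObj A Y).homology n →+ Abelian.Ext X Y n :=
  AddMonoidHom.liftOfSurjective ((P.complex.linearYonedaObj A Y).homologyπ n).hom.toAddMonoidHom
    (homologyπ_surjective _ n)
    ⟨cyclesToExt A P Y n, fun z ↦ (cyclesToExt_eq_zero_iff A P z).2⟩

variable {Y n} in
lemma homologyToExt_homologyπ (z : (P.complex.linearYonedaObj A Y).cycles n) :
    homologyToExt A P Y n ((P.complex.linearYonedaObj A Y).homologyπ n z) = cyclesToExt A P Y n z :=
  AddMonoidHom.liftOfRightInverse_comp_apply _ _ _ _ z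

lemma homologyToExt_bijective : Function.Bijective (homologyToExt A P Y n) := by
  constructor
  · rw [injective_iff_map_eq_zero]
    refine (homologyπ_surjective (P.complex.linearYonedaObj A Y) n).forall.2 fun z hz ↦ ?_
    rwa [homologyToExt_homologyπ, cyclesToExt_eq_zero_iff] at hz
  · intro e
    obtain ⟨z, rfl⟩ := cyclesToExt_surjective A P Y n e
    exact ⟨_, homologyToExt_homologyπ A P z⟩

end Resolution

variable [HasExt.{v} C]

lemma homologyToExt_homologyMap {X X' : C} {g : X' ⟶ X} {P : ProjectiveResolution X}
    {P' : ProjectiveResolution X'} (φ : P'.Hom P g) (Y : C) (n : ℕ)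
    (z : (P.complex.linearYonedaObj A Y).homology n) :
    homologyToExt A P' Y n (homologyMap (linearYonedaObjMap A φ.hom Y) n z) =
      (Abelian.Ext.mk₀ g).comp (homologyToExt A P Y n z) (zero_add n) := by
  obtain ⟨z, rfl⟩ := homologyπ_surjective _ n z
  have hz : cocycleHom P' (cyclesMap (linearYonedaObjMap A φ.hom Y) n z) =
      φ.hom.f n ≫ cocycleHom P z :=
    ConcreteCategory.congr_hom (cyclesMap_i (linearYonedaObjMap A φ.hom Y) n) z
  rw [← ConcreteCategory.comp_apply, homologyπ_naturality, ConcreteCategory.comp_apply]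
  simp only [homologyToExt_homologyπ, cyclesToExt, AddMonoidHom.mk'_apply, hz,
    ProjectiveResolution.mk₀_comp_extMk _ _ _ _ φ]

/-- The comparison between `Ext` as a derived functor, which is what `localCohomology` is built
from, and `Abelian.Ext`, for which the long exact sequences are available. -/
noncomputable def extAddEquiv [EnoughProjectives C] (X Y : C) (n : ℕ) :
    ((Ext A C n).obj (.op X)).obj Y ≃+ Abelian.Ext X Y n :=
  ((projectiveResolution X).isoExt n Y).toLinearEquiv.toAddEquiv.trans
    (AddEquiv.ofBijective _ (homologyToExt_bijective A (projectiveResolution X) Y n))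

lemma extAddEquiv_map [EnoughProjectives C] {X X' : C} (g : X' ⟶ X) {Y : C} {n : ℕ}
    (x : ((Ext A C n).obj (.op X)).obj Y) :
    extAddEquiv A X' Y n (((Ext A C n).map g.op).app Y x) =
      (Abelian.Ext.mk₀ g).comp (extAddEquiv A X Y n x) (zero_add n) := by
  let P := projectiveResolution X
  let P' := projectiveResolution X'
  let φ : P'.Hom P g := ⟨ProjectiveResolution.lift g P' P,
    (ProjectiveResolution.lift_commutes_zero g P' P).trans (by simp)⟩
  have square := isoExt_inv_naturality (A := A) φ n Y
  rw [Iso.inv_comp_eq, ← Category.assoc, Iso.eq_comp_inv] at square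
  exact (congrArg _ (ConcreteCategory.congr_hom square x)).trans
    (homologyToExt_homologyMap A φ Y n _)

end ExtComparison

/-! ### The sequence `0 → R ⧸ (J : a) → R ⧸ J → R ⧸ (J + (a)) → 0` -/

section ColonSequence

open Abelian

lemma mk₀_comp_extClass_comp {C : Type w} [Category.{v} C] [Abelian C] [HasExt.{v} C]
    {S T : ShortComplex C} (hS : S.ShortExact) (hT : T.ShortExact) (φ : S ⟶ T) {M : C} {i : ℕ}
    (f : Ext T.X₁ M i) :
    (Ext.mk₀ φ.τ₃).comp (hT.extClass.comp f (add_comm 1 i)) (zero_add (i + 1)) =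
      hS.extClass.comp ((Ext.mk₀ φ.τ₁).comp f (zero_add i)) (add_comm 1 i) := by
  rw [← Ext.comp_assoc _ _ _ (zero_add 1) (add_comm 1 i) (by omega),
    ← ShortComplex.ShortExact.extClass_naturality hS hT φ,
    Ext.comp_assoc _ _ _ (add_zero 1) (zero_add i) (by omega)]

variable {R : Type u} [CommRing R]

/-- The projection `R ⧸ J ⟶ R ⧸ K` for `J ≤ K`. -/
noncomputable def quotientProj {J K : Ideal R} (h : J ≤ K) :
    ModuleCat.of R (R ⧸ J) ⟶ ModuleCat.of R (R ⧸ K) :=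
  ModuleCat.ofHom (Submodule.factor h)

lemma comap_toSpanSingleton (J : Ideal R) (a : R) :
    Submodule.comap (LinearMap.toSpanSingleton R R a) J = J.colon {a} := by
  ext
  simp

/-- Multiplication by `a`, as a morphism `R ⧸ J ⟶ R ⧸ K` for `J ≤ (K : a)`. -/
noncomputable def quotientMulHom (a : R) {J K : Ideal R} (h : J ≤ K.colon {a}) :
    ModuleCat.of R (R ⧸ J) ⟶ ModuleCat.of R (R ⧸ K) :=
  ModuleCat.ofHom (Submodule.mapQ J K (LinearMap.toSpanSingleton R R a)
    (h.trans_eq (comap_toSpanSingleton K a).symm))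

lemma quotientProj_comp {J K L : Ideal R} (h : J ≤ K) (h' : K ≤ L) :
    quotientProj h ≫ quotientProj h' = quotientProj (h.trans h') :=
  ModuleCat.hom_ext (Submodule.factor_comp h h')

lemma quotientMulHom_comp_quotientProj (a : R) {J K L : Ideal R} (h : J ≤ K.colon {a})
    (h' : K ≤ L) :
    quotientMulHom a h ≫ quotientProj h' =
      quotientMulHom a (h.trans (Submodule.colon_mono h' subset_rfl)) := by
  refine ModuleCat.hom_ext (Submodule.linearMap_qext _ ?_)
  rfl

/-- The sequence `0 ⟶ R ⧸ (J : a) ⟶ R ⧸ J ⟶ R ⧸ (J + (a)) ⟶ 0`. -/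
noncomputable def colonShortComplex (J : Ideal R) (a : R) : ShortComplex (ModuleCat.{u} R) :=
  ShortComplex.mk (quotientMulHom a (le_refl (J.colon {a})))
    (quotientProj (le_sup_left : J ≤ J ⊔ Ideal.span {a})) <| by
      refine ModuleCat.hom_ext (Submodule.linearMap_qext _ (LinearMap.ext_ring ?_))
      refine (Submodule.Quotient.mk_eq_zero _).2 ?_
      simpa using Ideal.mem_sup_right (Ideal.mem_span_singleton_self a)

lemma colonShortComplex_shortExact (J : Ideal R) (a : R) : (colonShortComplex J a).ShortExact := by
  have hcomap := (comap_toSpanSingleton J a).ge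
  refine ModuleCat.shortComplex_shortExact _ (LinearMap.exact_iff.2 ?_) (LinearMap.ker_eq_bot.1 ?_)
    (Submodule.factor_surjective le_sup_left)
  · change (Submodule.mapQ J (J ⊔ Ideal.span {a}) LinearMap.id le_sup_left).ker =
      (Submodule.mapQ (J.colon {a}) J (LinearMap.toSpanSingleton R R a) hcomap).range
    rw [Submodule.ker_mapQ, Submodule.range_mapQ, LinearMap.range_toSpanSingleton,
      Submodule.comap_id, Submodule.map_sup, Submodule.mkQ_map_self, bot_sup_eq]
  · change (Submodule.mapQ (J.colon {a}) J (LinearMap.toSpanSingleton R R a) hcomap).ker = ⊥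
    rw [Submodule.ker_mapQ, comap_toSpanSingleton, Submodule.mkQ_map_self]

lemma exists_forall_colon_pow_le [IsNoetherianRing R] (J : Ideal R) (x : R) :
    ∃ k : ℕ, ∀ l, J.colon {x ^ l} ≤ J.colon {x ^ k} := by
  let colonPow : ℕ →o Ideal R :=
    { toFun := fun k ↦ J.colon {x ^ k}
      monotone' := monotone_nat_of_le_succ fun k r hr ↦ by
        rw [Submodule.mem_colon_singleton, smul_eq_mul] at hr ⊢
        rw [pow_succ, ← mul_assoc]
        exact J.mul_mem_right x hr }
  obtain ⟨k, hk⟩ := monotone_stabilizes_iff_noetherian.2 ‹IsNoetherianRing R› colonPow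
  exact ⟨k, fun l ↦ (colonPow.monotone (le_max_right k l)).trans (hk _ (le_max_left k l)).ge⟩

lemma colon_mul_le_colon_colon {J J' : Ideal R} (hJ : J' ≤ J) (a b : R) :
    J'.colon {a * b} ≤ (J.colon {a}).colon {b} := fun r hr ↦ by
  simp only [Submodule.mem_colon_singleton, smul_eq_mul] at hr ⊢
  rw [mul_assoc, mul_comm b]
  exact hJ hr

/-- The morphism of short exact sequences `colonShortComplex` induced by `J' ≤ J` and
multiplication by `b`. -/
noncomputable def colonShortComplexMap {J J' : Ideal R} (hJ : J' ≤ J) (a b : R) :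
    colonShortComplex J' (a * b) ⟶ colonShortComplex J a where
  τ₁ := quotientMulHom b (colon_mul_le_colon_colon hJ a b)
  τ₂ := quotientProj hJ
  τ₃ := quotientProj
    (sup_le_sup hJ (Ideal.span_singleton_le_span_singleton.2 (Dvd.intro b rfl)))
  comm₁₂ := by
    refine ModuleCat.hom_ext (Submodule.linearMap_qext _ (LinearMap.ext_ring ?_))
    exact congrArg (Submodule.Quotient.mk (p := J)) (by simp [mul_comm])
  comm₂₃ := by
    refine ModuleCat.hom_ext (Submodule.linearMap_qext _ ?_)
    rfl

variable {M : ModuleCat.{u} R} {i : ℕ}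

/-- The pullback `Ext^i(R ⧸ K, M) → Ext^i(R ⧸ J, M)` along the projection, for `J ≤ K`. -/
noncomputable def extRestrict {J K : Ideal R} (h : J ≤ K)
    (e : Ext (ModuleCat.of R (R ⧸ K)) M i) : Ext (ModuleCat.of R (R ⧸ J)) M i :=
  (Ext.mk₀ (quotientProj h)).comp e (zero_add i)

lemma extRestrict_extRestrict {J K L : Ideal R} (h : J ≤ K) (h' : K ≤ L)
    (e : Ext (ModuleCat.of R (R ⧸ L)) M i) :
    extRestrict h (extRestrict h' e) = extRestrict (h.trans h') e := by
  simp only [extRestrict, Ext.mk₀_comp_mk₀_assoc, quotientProj_comp]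

lemma extRestrict_eq_zero_of_le {J K L : Ideal R} (h : J ≤ K) {h' : K ≤ L}
    {e : Ext (ModuleCat.of R (R ⧸ L)) M i} (he : extRestrict h' e = 0) :
    extRestrict (h.trans h') e = 0 := by
  rw [← extRestrict_extRestrict h h', he, extRestrict, Ext.comp_zero]

/-- The connecting map `Ext^i(R ⧸ (J : a), M) → Ext^(i+1)(R ⧸ (J + (a)), M)` of
`colonShortComplex J a`. -/
noncomputable def colonConnecting (J : Ideal R) (a : R)
    (f : Ext (ModuleCat.of R (R ⧸ J.colon {a})) M i) :
    Ext (ModuleCat.of R (R ⧸ (J ⊔ Ideal.span {a}))) M (i + 1) :=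
  (colonShortComplex_shortExact J a).extClass.comp f (add_comm 1 i)

lemma colonConnecting_zero (J : Ideal R) (a : R) :
    colonConnecting J a (0 : Ext (ModuleCat.of R (R ⧸ J.colon {a})) M i) = 0 :=
  Ext.comp_zero _ _ _ _ _

lemma exists_colonConnecting_eq {J : Ideal R} {a : R}
    {e : Ext (ModuleCat.of R (R ⧸ (J ⊔ Ideal.span {a}))) M (i + 1)}
    (he : extRestrict le_sup_left e = 0) : ∃ f, colonConnecting J a f = e :=
  Ext.contravariant_sequence_exact₃ (colonShortComplex_shortExact J a) M e he (add_comm 1 i)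

lemma extRestrict_colonConnecting {J J' : Ideal R} (hJ : J' ≤ J) {a b : R}
    (h : J' ⊔ Ideal.span {a * b} ≤ J ⊔ Ideal.span {a})
    (f : Ext (ModuleCat.of R (R ⧸ J.colon {a})) M i) :
    extRestrict h (colonConnecting J a f) = colonConnecting J' (a * b)
      ((Ext.mk₀ (quotientMulHom b (colon_mul_le_colon_colon hJ a b))).comp f (zero_add i)) :=
  mk₀_comp_extClass_comp (colonShortComplex_shortExact J' (a * b))
    (colonShortComplex_shortExact J a) (colonShortComplexMap hJ a b) f

lemma extRestrict_colonConnecting_eq_zero {J J' : Ideal R} (hJ : J' ≤ J) {a b : R}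
    (hcolon : J' ≤ J.colon {a}) (hb : J'.colon {a * b} ≤ J'.colon {b})
    {f : Ext (ModuleCat.of R (R ⧸ J.colon {a})) M i} (hf : extRestrict hcolon f = 0)
    (h : J' ⊔ Ideal.span {a * b} ≤ J ⊔ Ideal.span {a}) :
    extRestrict h (colonConnecting J a f) = 0 := by
  rw [extRestrict_colonConnecting hJ, ← quotientMulHom_comp_quotientProj b hb hcolon,
    ← Ext.mk₀_comp_mk₀_assoc]
  change colonConnecting J' (a * b) ((Ext.mk₀ _).comp (extRestrict hcolon f) _) = 0
  rw [hf, Ext.comp_zero, colonConnecting_zero]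

end ColonSequence

/-! ### Vanishing of local cohomology in terms of `Ext` -/

section LocalCohomologyVanishing

open Abelian

variable {R : Type u} [CommRing R]

/-- The filtered colimit of `Ext^i(R ⧸ J, M)` over the ideals `J` with `I ≤ √J` is zero. For
finitely generated `I` the powers of `I` are cofinal among these ideals, so the colimit is
`H^i_I(M)`; letting `J` range over all of them avoids keeping track of exponents. -/
def AdicExtVanishes (I : Ideal R) (M : ModuleCat.{u} R) (i : ℕ) : Prop :=
  ∀ J : Ideal R, I ≤ J.radical → ∀ e : Ext (ModuleCat.of R (R ⧸ J)) M i,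
    ∃ (K : Ideal R) (h : K ≤ J), I ≤ K.radical ∧ extRestrict h e = 0

lemma adicExtVanishes_bot (M : ModuleCat.{u} R) (i : ℕ) :
    AdicExtVanishes (⊥ : Ideal R) M (i + 1) := by
  refine fun J _ e ↦ ⟨⊥, bot_le, bot_le, ?_⟩
  have : Module.Projective R (R ⧸ (⊥ : Ideal R)) :=
    Module.Projective.of_equiv (Submodule.quotEquivOfEqBot (⊥ : Ideal R) rfl).symm
  exact Ext.eq_zero_of_projective _

lemma AdicExtVanishes.sup_span_singleton [IsNoetherianRing R] {I : Ideal R} {M : ModuleCat.{u} R}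
    {i : ℕ} (h₀ : AdicExtVanishes I M i) (h₁ : AdicExtVanishes I M (i + 1)) (x : R) :
    AdicExtVanishes (I ⊔ Ideal.span {x}) M (i + 1) := by
  intro J hJ e
  obtain ⟨n, hxJ⟩ : x ∈ J.radical := hJ (Ideal.mem_sup_right (Ideal.mem_span_singleton_self x))
  obtain ⟨K, hKJ, hIK, hKe⟩ := h₁ J (le_sup_left.trans hJ) e
  have hKxJ : K ⊔ Ideal.span {x ^ n} ≤ J := sup_le hKJ ((Ideal.span_singleton_le_iff_mem J).2 hxJ)
  obtain ⟨f, hf⟩ : ∃ f, colonConnecting K (x ^ n) f = extRestrict hKxJ e :=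
    exists_colonConnecting_eq (by rwa [extRestrict_extRestrict])
  obtain ⟨L, hL, hIL, hLf⟩ := h₀ _ (hIK.trans (Ideal.radical_mono Ideal.le_colon)) f
  obtain ⟨k, hk⟩ := exists_forall_colon_pow_le (L ⊓ K) x
  have hcolon : (L ⊓ K).colon {x ^ n * x ^ k} ≤ (L ⊓ K).colon {x ^ k} := by
    rw [← pow_add]
    exact hk _
  have hle : L ⊓ K ⊔ Ideal.span {x ^ n * x ^ k} ≤ K ⊔ Ideal.span {x ^ n} :=
    sup_le_sup inf_le_right (Ideal.span_singleton_le_span_singleton.2 (Dvd.intro _ rfl))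
  have hradical : I ⊔ Ideal.span {x} ≤ (L ⊓ K ⊔ Ideal.span {x ^ n * x ^ k}).radical := by
    refine sup_le ?_ ((Ideal.span_singleton_le_iff_mem _).2 ⟨n + k, ?_⟩)
    · exact ((le_inf hIL hIK).trans_eq (Ideal.radical_inf L K).symm).trans
        (Ideal.radical_mono le_sup_left)
    · rw [pow_add]
      exact Ideal.mem_sup_right (Ideal.mem_span_singleton_self _)
  refine ⟨_, hle.trans hKxJ, hradical, ?_⟩
  rw [← extRestrict_extRestrict hle hKxJ, ← hf]
  exact extRestrict_colonConnecting_eq_zero inf_le_right _ hcolon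
    (extRestrict_eq_zero_of_le inf_le_left hLf) hle

lemma subsingleton_pt_iff_of_isColimit {A : Type u} [Ring A] {D : Type*} [Category* D]
    [IsFiltered D] {F : D ⥤ ModuleCat.{v} A}
    [Limits.PreservesColimit F (forget (ModuleCat.{v} A))] {c : Limits.Cocone F}
    (hc : Limits.IsColimit c) :
    Subsingleton c.pt ↔ ∀ (j : D) (x : F.obj j), ∃ (k : D) (f : j ⟶ k), F.map f x = 0 := by
  constructor
  · intro _ j x
    obtain ⟨k, f, g, hfg⟩ := Limits.Concrete.isColimit_exists_of_rep_eq F hc x (0 : F.obj j)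
      (Subsingleton.elim (α := c.pt) _ _)
    exact ⟨k, f, by rw [hfg, map_zero]⟩
  · intro h
    refine subsingleton_of_forall_eq 0 fun z ↦ ?_
    obtain ⟨j, x, rfl⟩ := Limits.Concrete.isColimit_exists_rep F hc z
    obtain ⟨k, f, hf⟩ := h j x
    rw [← c.w f, ConcreteCategory.comp_apply, hf, map_zero]

lemma extRestrict_extAddEquiv_eq_zero_iff {J K : Ideal R} (h : J ≤ K) {M : ModuleCat.{u} R} {i : ℕ}
    (x : ((Ext R (ModuleCat.{u} R) i).obj (.op (ModuleCat.of R (R ⧸ K)))).obj M) :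
    extRestrict h (extAddEquiv R _ M i x) = 0 ↔
      ((Ext R (ModuleCat.{u} R) i).map (quotientProj h).op).app M x = 0 := by
  rw [extRestrict, ← extAddEquiv_map, map_eq_zero_iff _ (extAddEquiv R _ M i).injective]

lemma subsingleton_localCohomology_iff (I : Ideal R) (i : ℕ) (M : ModuleCat.{u} R) :
    Subsingleton ((localCohomology I i).obj M) ↔
      ∀ (n : ℕ) (e : Abelian.Ext (ModuleCat.of R (R ⧸ I ^ n)) M i),
        ∃ (m : ℕ) (h : n ≤ m), extRestrict (Ideal.pow_le_pow_right (I := I) h) e = 0 := by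
  have := localCohomology.hasColimitDiagram.{u, 0} (localCohomology.idealPowersDiagram I) i
  have isColimit := Limits.isColimitOfPreserves ((evaluation _ _).obj M) (Limits.colimit.isColimit
    (localCohomology.diagram (localCohomology.idealPowersDiagram I) i))
  have : Limits.PreservesFilteredColimitsOfSize.{0, 0} (forget (ModuleCat.{u} R)) :=
    Limits.preservesSmallestFilteredColimits_of_preservesFilteredColimits.{u, u} _
  have : Limits.PreservesColimitsOfShape ℕᵒᵖᵒᵖ (forget (ModuleCat.{u} R)) :=
    Limits.PreservesFilteredColimitsOfSize.preserves_filtered_colimits _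
  refine (subsingleton_pt_iff_of_isColimit isColimit).trans ⟨fun h n e ↦ ?_, fun h n x ↦ ?_⟩
  · obtain ⟨x, rfl⟩ := (extAddEquiv R _ M i).surjective e
    obtain ⟨m, f, hf⟩ := h (.op (.op n)) x
    exact ⟨m.unop.unop, f.unop.unop.le, (extRestrict_extAddEquiv_eq_zero_iff _ x).2 hf⟩
  · obtain ⟨m, hnm, hm⟩ := h n.unop.unop (extAddEquiv R _ M i x)
    exact ⟨.op (.op m), (homOfLE hnm).op.op, (extRestrict_extAddEquiv_eq_zero_iff _ x).1 hm⟩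

lemma adicExtVanishes_iff_of_fg {I : Ideal R} (hI : I.FG) (M : ModuleCat.{u} R) (i : ℕ) :
    AdicExtVanishes I M i ↔ Subsingleton ((localCohomology I i).obj M) := by
  have le_radical_pow (n : ℕ) : I ≤ (I ^ n).radical := fun x hx ↦ ⟨n, Ideal.pow_mem_pow hx n⟩
  rw [subsingleton_localCohomology_iff]
  constructor
  · intro h n e
    obtain ⟨K, hK, hIK, he⟩ := h (I ^ n) (le_radical_pow n) e
    obtain ⟨m, hm⟩ := Ideal.exists_pow_le_of_le_radical_of_fg hIK hI
    exact ⟨max n m, le_max_left n m,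
      extRestrict_eq_zero_of_le ((Ideal.pow_le_pow_right (le_max_right n m)).trans hm) he⟩
  · intro h J hJ e
    obtain ⟨n, hn⟩ := Ideal.exists_pow_le_of_le_radical_of_fg hJ hI
    obtain ⟨m, hnm, he⟩ := h n (extRestrict hn e)
    rw [extRestrict_extRestrict] at he
    exact ⟨I ^ m, _, le_radical_pow m, he⟩

end LocalCohomologyVanishing

/-! ### Cohomological dimension -/

section CohomologicalDimension

variable {R : Type u} [CommRing R]

lemma cohomologicalDimension_le_iff {I : Ideal R} {M : ModuleCat.{u} R} {d : ℕ∞} :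
    cohomologicalDimension I M ≤ d ↔
      ∀ i : ℕ, d < i → Subsingleton ((localCohomology I i).obj M) := by
  simp only [cohomologicalDimension, sSup_le_iff, ← not_nontrivial_iff_subsingleton]
  constructor
  · exact fun h i hi hM ↦ (h i ⟨i, rfl, hM⟩).not_gt hi
  · rintro h _ ⟨i, rfl, hM⟩
    exact not_lt.1 fun hi ↦ h i hi hM

lemma cohomologicalDimension_bot (M : ModuleCat.{u} R) :
    cohomologicalDimension (⊥ : Ideal R) M = 0 := by
  refine nonpos_iff_eq_zero.1 (cohomologicalDimension_le_iff.2 fun i hi ↦ ?_)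
  obtain ⟨j, rfl⟩ := Nat.exists_eq_succ_of_ne_zero (Nat.cast_pos.1 hi).ne'
  exact (adicExtVanishes_iff_of_fg Submodule.fg_bot M _).1 (adicExtVanishes_bot M j)

variable [IsNoetherianRing R]

lemma cohomologicalDimension_sup_span_singleton_le (I : Ideal R) (M : ModuleCat.{u} R) (x : R) :
    cohomologicalDimension (I ⊔ Ideal.span {x}) M ≤ cohomologicalDimension I M + 1 := by
  have vanishes {j : ℕ} (hj : cohomologicalDimension I M < j) : AdicExtVanishes I M j :=
    (adicExtVanishes_iff_of_fg (IsNoetherian.noetherian I) M j).2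
      (cohomologicalDimension_le_iff.1 le_rfl j hj)
  refine cohomologicalDimension_le_iff.2 fun i hi ↦ ?_
  obtain ⟨j, rfl⟩ := Nat.exists_eq_succ_of_ne_zero (Nat.cast_pos.1 (zero_le.trans_lt hi)).ne'
  have hj : cohomologicalDimension I M < j := by
    rw [Nat.cast_succ] at hi
    exact lt_of_add_lt_add_right hi
  have hj' : cohomologicalDimension I M < (j + 1 : ℕ) := hj.trans (mod_cast Nat.lt_succ_self j)
  exact (adicExtVanishes_iff_of_fg (IsNoetherian.noetherian _) M _).1
    ((vanishes hj).sup_span_singleton (vanishes hj') x)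

lemma exists_lt_cohomologicalDimension_eq {I : Ideal R} {M : ModuleCat.{u} R} {d : ℕ∞}
    (hd : d < cohomologicalDimension I M) : ∃ J < I, cohomologicalDimension J M = d := by
  obtain ⟨J, ⟨hJI, hJd⟩, hmax⟩ := set_has_maximal_iff_noetherian.2 ‹IsNoetherianRing R›
    {J | J ≤ I ∧ cohomologicalDimension J M ≤ d} ⟨⊥, bot_le, by simp [cohomologicalDimension_bot]⟩
  have hlt : J < I := hJI.lt_of_ne (by rintro rfl; exact hJd.not_gt hd)
  obtain ⟨x, hxI, hxJ⟩ := SetLike.exists_of_lt hlt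
  have hd_lt : d < cohomologicalDimension (J ⊔ Ideal.span {x}) M := by
    by_contra! hle
    exact hmax _ ⟨sup_le hJI ((Ideal.span_singleton_le_iff_mem I).2 hxI), hle⟩
      (Submodule.lt_sup_iff_notMem.2 hxJ)
  exact ⟨J, hlt, hJd.antisymm (Order.le_of_lt_add_one
    (hd_lt.trans_le (cohomologicalDimension_sup_span_singleton_le J M x)))⟩

end CohomologicalDimension

/-- if `cd(I,M) = c > 0`, there is a descending chain of ideals
`I = I_c ⊋ I_{c-1} ⊋ ⋯ ⊋ I_0` with `cd(I_i, M) = i` for all `0 ≤ i ≤ c`. -/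
theorem descending_chain_of_ideals_with_successive_cohomological_dimensions
    (R : Type u) [CommRing R] [IsNoetherianRing R] (I : Ideal R) (M : ModuleCat.{u} R)
    (c : ℕ) (hc : 0 < c) (hcd : cohomologicalDimension I M = (c : ℕ∞)) :
    ∃ J : ℕ → Ideal R, J c = I ∧ (∀ i < c, J i < J (i + 1)) ∧
      ∀ i ≤ c, cohomologicalDimension (J i) M = (i : ℕ∞) := by
  clear hc
  induction c generalizing I with
  | zero => exact ⟨fun _ ↦ I, rfl, by simp, by simpa using hcd⟩
  | succ c ih =>
    obtain ⟨I', hI', hI'c⟩ := exists_lt_cohomologicalDimension_eq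
      (hcd.symm ▸ mod_cast Nat.lt_succ_self c : (c : ℕ∞) < cohomologicalDimension I M)
    obtain ⟨J, hJc, hJlt, hJcd⟩ := ih I' hI'c
    refine ⟨fun i ↦ if i ≤ c then J i else I, by simp, fun i hi ↦ ?_, fun i hi ↦ ?_⟩
    · rcases Nat.lt_succ_iff_lt_or_eq.1 hi with h | rfl
      · simpa [h.le, Nat.succ_le_of_lt h] using hJlt i h
      · simpa [hJc] using hI'
    · rcases Nat.le_succ_iff.1 hi with h | rfl
      · simpa [h] using hJcd i h
      · simpa using hcd
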